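/- For any finite simple graph G, the limit Y = lim_{z→∞} Y(z) ∈ [0,∞]^{E⃗} (which exists coordinatewise by monotonicity) is the smallest solution in [0,∞]^{E⃗} of the fixed-point equation Y = 𝒬_G(ℛ_G(Y)): Y satisfies the equation, and Y ≤ Z coordinatewise for every Z ∈ [0,∞]^{E⃗} with Z = 𝒬_G(ℛ_G(Z)). -/

import Mathlib

open Finset Filter Topology

variable {V : Type*} [Fintype V] [DecidableEq V]

namespace SimpleGraph

variable (G : SimpleGraph V) [DecidableRel G.Adj]

/-- The type of directed edges of `G`. -/
abbrev DEdge : Type _ := {p : V × V // G.Adj p.1 p.2}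

/-- Reversal of a directed edge. -/
def rev (e : G.DEdge) : G.DEdge := ⟨(e.1.2, e.1.1), e.2.symm⟩

/-- Sum of the messages `X (w → u)` over `w ∈ ∂u \ {v}`. -/
def exclSum {M : Type*} [AddCommMonoid M] (X : G.DEdge → M) (u v : V) : M :=
  ∑ w ∈ ((G.neighborFinset u).erase v).attach,
    X ⟨(w.1, u), ((mem_neighborFinset _ _ _).mp (Finset.mem_of_mem_erase w.2)).symm⟩

/-- The BP map `ℛ_G`: `(ℛ_G X)_{u→v} = 1 / (1 + ∑_{w ∈ ∂u∖v} X_{w→u})`. -/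
noncomputable def bpR (X : G.DEdge → ℝ) (e : G.DEdge) : ℝ :=
  1 / (1 + G.exclSum X e.1.1 e.1.2)

/-- `Y` is a positive fixed point of `X = z ⬝ ℛ_G X`. -/
def IsBPFixed (z : ℝ) (Y : G.DEdge → ℝ) : Prop :=
  (∀ e, 0 < Y e) ∧ ∀ e, Y e = z * G.bpR Y e

/-- Sum of messages pointing into `v`. -/
def inFlow {M : Type*} [AddCommMonoid M] (X : G.DEdge → M) (v : V) : M :=
  ∑ u ∈ (G.neighborFinset v).attach,
    X ⟨(u.1, v), ((mem_neighborFinset _ _ _).mp u.2).symm⟩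

/-- Sum of messages pointing out of `v`. -/
def outFlow {M : Type*} [AddCommMonoid M] (X : G.DEdge → M) (v : V) : M :=
  ∑ u ∈ (G.neighborFinset v).attach,
    X ⟨(v, u.1), (mem_neighborFinset _ _ _).mp u.2⟩

/-- The map `𝒫_G` on `{0,1}`-valued messages. -/
def bpP (I : G.DEdge → ℕ) (e : G.DEdge) : ℕ :=
  if G.exclSum I e.1.1 e.1.2 = 0 then 1 else 0

/-- `F_v(I) = min(1, Σ_{u ∈ ∂v} I_{u→v}) + max(0, 1 − Σ_{u ∈ ∂v} I_{v→u})`. -/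
def Fv (I : G.DEdge → ℕ) (v : V) : ℕ :=
  min 1 (G.inFlow I v) + (1 - G.outFlow I v)

/-- The value `x_e(z)` built from the messages. -/
noncomputable def xval (Y : G.DEdge → ℝ) (z : ℝ) (e : G.DEdge) : ℝ :=
  Y e * Y (G.rev e) / (z + Y e * Y (G.rev e))

/-- Weight (number of present edges) of a `{0,1}`-vector on edges. -/
def mWeight (B : G.edgeSet → Bool) : ℕ := ∑ e : G.edgeSet, if B e then 1 else 0

/-- `B` is (the indicator vector of) a matching. -/
def IsMatchingVec (B : G.edgeSet → Bool) : Prop :=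
  ∀ v : V, (∑ e : G.edgeSet, if B e ∧ v ∈ (e : Sym2 V) then 1 else 0) ≤ 1

instance (B : G.edgeSet → Bool) : Decidable (G.IsMatchingVec B) := by
  unfold IsMatchingVec; infer_instance

/-- Partition function of the monomer-dimer model. -/
noncomputable def gibbsP (z : ℝ) : ℝ :=
  ∑ B : G.edgeSet → Bool, if G.IsMatchingVec B then z ^ G.mWeight B else 0

/-- Edges incident to `v`. -/
def incE (v : V) : Finset G.edgeSet :=
  Finset.univ.filter (fun e => v ∈ (e : Sym2 V))

end SimpleGraph


namespace SimpleGraph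
open ENNReal
variable (G : SimpleGraph V) [DecidableRel G.Adj]

/-- The map `ℛ_G` extended to `[0,∞]`-valued messages: in `ℝ≥0∞` one has `1/(1+∞) = 0`,
matching the convention that `(ℛ_G Y)_{u→v} = 0` when some `Y_{w→u} = ∞`. -/
noncomputable def bpRE (X : G.DEdge → ℝ≥0∞) (e : G.DEdge) : ℝ≥0∞ :=
  1 / (1 + G.exclSum X e.1.1 e.1.2)

/-- The map `𝒬_G`: `(𝒬_G X)_{u→v} = 1/(Σ_{w ∈ ∂u∖v} X_{w→u})`, with `1/0 = ∞`. -/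
noncomputable def bpQE (X : G.DEdge → ℝ≥0∞) (e : G.DEdge) : ℝ≥0∞ :=
  1 / G.exclSum X e.1.1 e.1.2

/-- `𝒟_v(Y) = (Σ_{e⃗ ∈ ∂v} Y_{e⃗})/(1 + Σ_{e⃗ ∈ ∂v} Y_{e⃗})`, set to `1` when the sum is
infinite. -/
noncomputable def DvE (X : G.DEdge → ℝ≥0∞) (v : V) : ℝ :=
  if G.inFlow X v = ∞ then 1 else (G.inFlow X v).toReal / (1 + (G.inFlow X v).toReal)

/-- The `{0,1}`-valued message recording which coordinates of `Y` are infinite. -/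
noncomputable def infInd (X : G.DEdge → ℝ≥0∞) (e : G.DEdge) : ℕ :=
  if X e = ∞ then 1 else 0

end SimpleGraph


/-!
The fixed-point equation `Y = z ℛ(Y)`, substituted into itself, reads
`1 / Y_e = 1 / z + ∑_w ℛ(Y)_w` in `ℝ≥0∞` (`inv_eq_of_bpRE_fixed`), where `∑_w` is the sum occurring
in `𝒬(·)_e`. All operations involved are continuous on `ℝ≥0∞`, so letting `z → ∞` gives
`1 / Y_e = ∑_w ℛ(Y)_w`, that is, `Y = 𝒬(ℛ(Y))`.

For minimality, it suffices to prove `Y(z) ≤ Z` for each `z` and each solution `Z` of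
`Z = 𝒬(ℛ(Z))` (`le_of_bpRE_fixed`). Otherwise `lam = max_e Y(z)_e / Z_e` exceeds `1`. From
`Y(z) ≤ lam Z` and `lam ≥ 1` one gets `ℛ(Y(z)) ≥ lam⁻¹ ℛ(Z)`, so at an edge `e` attaining the
maximum `1 / Y(z)_e ≥ 1 / z + lam⁻¹ / Z_e = 1 / z + 1 / Y(z)_e`, which is absurd because
`1 / z > 0` and `1 / Y(z)_e < ∞`.
-/

namespace SimpleGraph

open ENNReal

variable (G : SimpleGraph V) [DecidableRel G.Adj]

lemma exclSum_mul_left (c : ℝ≥0∞) (X : G.DEdge → ℝ≥0∞) (u v : V) :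
    G.exclSum (fun e => c * X e) u v = c * G.exclSum X u v := by
  simp only [exclSum, Finset.mul_sum]

lemma exclSum_mono {X X' : G.DEdge → ℝ≥0∞} (h : ∀ e, X e ≤ X' e) (u v : V) :
    G.exclSum X u v ≤ G.exclSum X' u v :=
  Finset.sum_le_sum fun _ _ => h _

lemma exclSum_ne_top {X : G.DEdge → ℝ≥0∞} (h : ∀ e, X e ≠ ∞) (u v : V) :
    G.exclSum X u v ≠ ∞ :=
  ENNReal.sum_ne_top.2 fun _ _ => h _

lemma ofReal_exclSum {X : G.DEdge → ℝ} (h : ∀ e, 0 ≤ X e) (u v : V) :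
    ENNReal.ofReal (G.exclSum X u v) = G.exclSum (fun e => ENNReal.ofReal (X e)) u v :=
  ENNReal.ofReal_sum_of_nonneg fun _ _ => h _

lemma tendsto_exclSum {α : Type*} {l : Filter α} {X : α → G.DEdge → ℝ≥0∞}
    {X' : G.DEdge → ℝ≥0∞} (h : ∀ e, Tendsto (fun a => X a e) l (𝓝 (X' e))) (u v : V) :
    Tendsto (fun a => G.exclSum (X a) u v) l (𝓝 (G.exclSum X' u v)) :=
  tendsto_finsetSum _ fun _ _ => h _

lemma tendsto_bpRE {α : Type*} {l : Filter α} {X : α → G.DEdge → ℝ≥0∞}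
    {X' : G.DEdge → ℝ≥0∞} (h : ∀ e, Tendsto (fun a => X a e) l (𝓝 (X' e))) (e : G.DEdge) :
    Tendsto (fun a => G.bpRE (X a) e) l (𝓝 (G.bpRE X' e)) := by
  simp only [bpRE, one_div]
  exact ((G.tendsto_exclSum h _ _).const_add 1).inv

lemma bpRE_le_one (X : G.DEdge → ℝ≥0∞) (e : G.DEdge) : G.bpRE X e ≤ 1 := by
  simp [bpRE, ENNReal.inv_le_one]

/-- A real fixed point of `z ℛ_G` is also one for the extended map on `ℝ≥0∞`. -/
lemma IsBPFixed.ofReal {z : ℝ} (hz : 0 < z) {Y : G.DEdge → ℝ} (hY : G.IsBPFixed z Y)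
    (e : G.DEdge) :
    ENNReal.ofReal (Y e)
      = ENNReal.ofReal z * G.bpRE (fun e => ENNReal.ofReal (Y e)) e := by
  have hS : 0 ≤ G.exclSum Y e.1.1 e.1.2 := Finset.sum_nonneg fun _ _ => (hY.1 _).le
  rw [hY.2 e, ENNReal.ofReal_mul hz.le, bpR, bpRE, one_div, one_div,
    ENNReal.ofReal_inv_of_pos (by positivity), ENNReal.ofReal_add zero_le_one hS,
    ENNReal.ofReal_one, G.ofReal_exclSum fun e => (hY.1 e).le]

/-- The two-step form of the fixed-point equation `y = z ℛ_G(y)`. -/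
lemma inv_eq_of_bpRE_fixed {z : ℝ≥0∞} (hz : z ≠ 0) (hz' : z ≠ ∞) {y : G.DEdge → ℝ≥0∞}
    (hy : ∀ e, y e = z * G.bpRE y e) (e : G.DEdge) :
    (y e)⁻¹ = z⁻¹ + G.exclSum (G.bpRE y) e.1.1 e.1.2 := by
  have h1 : G.bpRE y = fun e => z⁻¹ * y e := by
    funext e
    rw [hy e, ← mul_assoc, ENNReal.inv_mul_cancel hz hz', one_mul]
  rw [h1, exclSum_mul_left, hy e, ENNReal.mul_inv (Or.inl hz) (Or.inl hz'), bpRE, one_div, inv_inv,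
    mul_add, mul_one]

/-- Multiplying the messages by at least `1` divides `ℛ_G` by at most that factor. -/
lemma inv_mul_bpRE_le {y Z : G.DEdge → ℝ≥0∞} {lam : ℝ≥0∞} (h1 : 1 ≤ lam) (hlam : lam ≠ ∞)
    (h : ∀ e, y e ≤ lam * Z e) (e : G.DEdge) : lam⁻¹ * G.bpRE Z e ≤ G.bpRE y e := by
  have h0 : lam ≠ 0 := (zero_lt_one.trans_le h1).ne'
  rw [bpRE, bpRE, one_div, one_div, ← ENNReal.mul_inv (Or.inl h0) (Or.inl hlam)]
  refine ENNReal.inv_le_inv.2 ?_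
  rw [mul_add, mul_one]
  refine add_le_add h1 ?_
  rw [← exclSum_mul_left]
  exact G.exclSum_mono h _ _

/-- Every fixed point of `z ℛ_G` lies below every fixed point of `𝒬_G ∘ ℛ_G`. -/
lemma le_of_bpRE_fixed {z : ℝ≥0∞} (hz : z ≠ 0) (hz' : z ≠ ∞) {y Z : G.DEdge → ℝ≥0∞}
    (hy0 : ∀ e, y e ≠ 0) (hy' : ∀ e, y e ≠ ∞) (hy : ∀ e, y e = z * G.bpRE y e)
    (hZ : ∀ e, Z e = G.bpQE (G.bpRE Z) e) (e : G.DEdge) : y e ≤ Z e := by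
  by_contra! hlt
  -- `ℛ_G ≤ 1`, so the sums in the denominator of `𝒬_G` are finite.
  have hZ0 : ∀ e, Z e ≠ 0 := fun e => by
    rw [hZ e, bpQE, one_div]
    exact ENNReal.inv_ne_zero.2 (G.exclSum_ne_top
      (fun e => ((G.bpRE_le_one Z e).trans_lt one_lt_top).ne) _ _)
  have : Nonempty G.DEdge := ⟨e⟩
  obtain ⟨m, hm⟩ := Finite.exists_max fun e => y e / Z e
  set lam := y m / Z m with hlamdef
  have h1 : 1 < lam := by
    refine lt_of_lt_of_le ?_ (hm e)
    rw [ENNReal.lt_div_iff_mul_lt (Or.inl (hZ0 e)) (Or.inl hlt.ne_top), one_mul]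
    exact hlt
  have hlam : lam ≠ ∞ := ENNReal.div_ne_top (hy' m) (hZ0 m)
  have hZm : Z m ≠ ∞ := by
    intro h
    rw [hlamdef, h, ENNReal.div_top] at h1
    exact absurd h1 (by simp)
  have hle : ∀ x, y x ≤ lam * Z x := by
    intro x
    by_cases hx : Z x = ∞
    · rw [hx, ENNReal.mul_top (zero_lt_one.trans h1).ne']
      exact le_top
    · exact (ENNReal.div_le_iff (hZ0 x) hx).1 (hm x)
  have hsum : (y m)⁻¹ ≤ G.exclSum (G.bpRE y) m.1.1 m.1.2 := by
    have hZinv : (Z m)⁻¹ = G.exclSum (G.bpRE Z) m.1.1 m.1.2 := by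
      rw [hZ m, bpQE, one_div, inv_inv]
    have hym : y m = lam * Z m := (ENNReal.div_mul_cancel (hZ0 m) hZm).symm
    rw [hym, ENNReal.mul_inv (Or.inr hZm) (Or.inl hlam), hZinv, ← exclSum_mul_left]
    exact G.exclSum_mono (G.inv_mul_bpRE_le h1.le hlam hle) _ _
  have hlt' : (y m)⁻¹ < (y m)⁻¹ + z⁻¹ :=
    ENNReal.lt_add_right (ENNReal.inv_ne_top.2 (hy0 m)) (ENNReal.inv_ne_zero.2 hz')
  refine absurd (G.inv_eq_of_bpRE_fixed hz hz' hy m) (ne_of_lt (hlt'.trans_le ?_))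
  rw [add_comm]
  gcongr

end SimpleGraph

open ENNReal in
/-- The limit `Y = lim_{z→∞} Y(z) ∈ [0,∞]^{E⃗}` is the smallest solution of
`Y = 𝒬_G (ℛ_G Y)`. -/
theorem labp_limit_smallest_fixed_point (G : SimpleGraph V) [DecidableRel G.Adj]
    (Y : ℝ → G.DEdge → ℝ) (hY : ∀ z, 0 < z → G.IsBPFixed z (Y z))
    (YE : G.DEdge → ℝ≥0∞)
    (hlim : ∀ e, Filter.Tendsto (fun z => ENNReal.ofReal (Y z e)) Filter.atTop (nhds (YE e))) :
    (∀ e, YE e = G.bpQE (G.bpRE YE) e) ∧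
    ∀ Z : G.DEdge → ℝ≥0∞, (∀ e, Z e = G.bpQE (G.bpRE Z) e) → ∀ e, YE e ≤ Z e := by
  have hfix := fun z (hz : 0 < z) => (hY z hz).ofReal G hz
  have hz0 : ∀ z : ℝ, 0 < z → ENNReal.ofReal z ≠ 0 := fun z hz => (ENNReal.ofReal_pos.2 hz).ne'
  constructor
  · intro e
    have hR : Tendsto (fun z : ℝ => (ENNReal.ofReal z)⁻¹
          + G.exclSum (G.bpRE fun e => ENNReal.ofReal (Y z e)) e.1.1 e.1.2) atTop
        (𝓝 (∞⁻¹ + G.exclSum (G.bpRE YE) e.1.1 e.1.2)) :=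
      (ENNReal.tendsto_ofReal_atTop.inv).add (G.tendsto_exclSum (G.tendsto_bpRE hlim) _ _)
    have heq := tendsto_nhds_unique ((hlim e).inv.congr' ?_) hR
    · rw [SimpleGraph.bpQE, one_div, ← inv_inv (YE e), heq, ENNReal.inv_top, zero_add]
    · filter_upwards [eventually_gt_atTop 0] with z hz
      exact G.inv_eq_of_bpRE_fixed (hz0 z hz) ENNReal.ofReal_ne_top (hfix z hz) e
  · intro Z hZ e
    refine le_of_tendsto (hlim e) ?_
    filter_upwards [eventually_gt_atTop 0] with z hz
    exact G.le_of_bpRE_fixed (hz0 z hz) ENNReal.ofReal_ne_top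
      (fun e => (ENNReal.ofReal_pos.2 ((hY z hz).1 e)).ne') (fun _ => ENNReal.ofReal_ne_top)
      (hfix z hz) hZ e
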